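/- In the MM-SPIR model (with all constraints), for every size-P subset 𝒫 of {1,…,K} and every database index n ∈ {1,…,N}: P·L ≤ H(A_1^{[𝒫]},…,A_N^{[𝒫]} | F) − H(A_n^{[𝒫]} | F). -/

import Mathlib

open Finset

namespace MMSPIR

variable {Ω : Type} [Fintype Ω]

/-- Probability that the random variable `X` takes the value `v`,
under the weight function `p` on the finite sample space `Ω`. -/
noncomputable def prob (p : Ω → ℝ) {V : Type} [DecidableEq V] (X : Ω → V) (v : V) : ℝ :=
  ∑ ω ∈ Finset.univ.filter (fun ω => X ω = v), p ω

/-- Shannon entropy of `X`, with logarithm taken to base `q`. -/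
noncomputable def ent (q : ℕ) (p : Ω → ℝ) {V : Type} [Fintype V] [DecidableEq V]
    (X : Ω → V) : ℝ :=
  -∑ v : V, prob p X v * Real.logb q (prob p X v)

/-- Conditional entropy `H(X | Y)`, base `q`. -/
noncomputable def cent (q : ℕ) (p : Ω → ℝ) {V W : Type} [Fintype V] [DecidableEq V]
    [Fintype W] [DecidableEq W] (X : Ω → V) (Y : Ω → W) : ℝ :=
  ent q p (fun ω => (X ω, Y ω)) - ent q p Y

/-- Mutual information `I(X ; Y)`, base `q`. -/
noncomputable def mi (q : ℕ) (p : Ω → ℝ) {V W : Type} [Fintype V] [DecidableEq V]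
    [Fintype W] [DecidableEq W] (X : Ω → V) (Y : Ω → W) : ℝ :=
  ent q p X + ent q p Y - ent q p (fun ω => (X ω, Y ω))

/-- Conditional mutual information `I(X ; Y | Z)`, base `q`. -/
noncomputable def cmi (q : ℕ) (p : Ω → ℝ) {U V W : Type} [Fintype U] [DecidableEq U]
    [Fintype V] [DecidableEq V] [Fintype W] [DecidableEq W]
    (X : Ω → U) (Y : Ω → V) (Z : Ω → W) : ℝ :=
  cent q p X Z + cent q p Y Z - cent q p (fun ω => (X ω, Y ω)) Z

/-- `X` and `Y` have the same distribution. -/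
def IdentDist (p : Ω → ℝ) {V : Type} [DecidableEq V] (X Y : Ω → V) : Prop :=
  ∀ v, prob p X v = prob p Y v

/-!
Decoding the desired messages `W_𝒫` from all answers costs at least `H(W_𝒫 | A_n, F)` beyond the
answer `A_n`. Given `Q_n` and `A_n`, the randomness `F` carries no further information about the
messages, so this cost is at least `H(W_𝒫 | Q_n, A_n)`. By user privacy, the pair `(Q_n, A_n)` might
as well belong to any other demand `𝒫₁`; by reliability and database privacy for `𝒫₁`, a message
outside `𝒫₁` is independent of `W_𝒫₁` together with this pair. Revealing `W_𝒫` message by message,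
and choosing each time a demand `𝒫₁` that contains the messages already revealed but not the next
one, the chain rule shows that nothing about `W_𝒫` leaks from `(Q_n, A_n)`.
-/

section Probability

variable {p : Ω → ℝ} {V W : Type} [DecidableEq V] [DecidableEq W]

theorem prob_nonneg (hp0 : ∀ ω, 0 ≤ p ω) (X : Ω → V) (v : V) : 0 ≤ prob p X v :=
  sum_nonneg fun ω _ => hp0 ω

theorem sum_prob [Fintype V] (X : Ω → V) : ∑ v, prob p X v = ∑ ω, p ω :=
  sum_fiberwise univ X p

theorem prob_comp [Fintype V] (X : Ω → V) (f : V → W) (w : W) :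
    prob p (fun ω => f (X ω)) w = ∑ v, if f v = w then prob p X v else 0 := by
  simp only [prob, ← sum_filter]
  rw [← sum_fiberwise_of_maps_to (g := X) (t := univ.filter fun v => f v = w) (by simp)]
  refine sum_congr rfl fun v hv => sum_congr ?_ fun _ _ => rfl
  ext ω
  simp only [mem_filter, mem_univ, true_and] at hv ⊢
  exact ⟨And.right, fun h => ⟨h ▸ hv, h⟩⟩

theorem sum_prob_pair [Fintype V] (X : Ω → V) (Z : Ω → W) (z : W) :
    ∑ x, prob p (fun ω => (X ω, Z ω)) (x, z) = prob p Z z := by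
  rw [prob, ← sum_fiberwise _ X p]
  simp only [prob, Prod.mk.injEq, filter_filter, and_comm]

theorem prob_le_prob_comp (hp0 : ∀ ω, 0 ≤ p ω) (X : Ω → V) (f : V → W) (v : V) :
    prob p X v ≤ prob p (fun ω => f (X ω)) (f v) :=
  sum_le_sum_of_subset_of_nonneg (monotone_filter_right _ fun _ _ h => congrArg f h)
    fun ω _ _ => hp0 ω

theorem prob_comp_of_injective (X : Ω → V) {f : V → W} (hf : Function.Injective f) (v : V) :
    prob p (fun ω => f (X ω)) (f v) = prob p X v := by
  simp only [prob, hf.eq_iff]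

theorem sum_prob_comp_mul [Fintype V] [Fintype W] (X : Ω → V) (f : V → W) (h : W → ℝ) :
    ∑ w, prob p (fun ω => f (X ω)) w * h w = ∑ v, prob p X v * h (f v) := by
  simp only [prob_comp X f, sum_mul, ite_mul, zero_mul]
  rw [sum_comm]
  simp

theorem IdentDist.comp [Finite V] {X Y : Ω → V} (h : IdentDist p X Y) (f : V → W) :
    IdentDist p (fun ω => f (X ω)) (fun ω => f (Y ω)) := fun w => by
  have := Fintype.ofFinite V
  simp only [prob_comp _ f, h _]

end Probability

section Entropy

variable {q : ℕ} {p : Ω → ℝ} {U V W : Type} [Fintype U] [DecidableEq U]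
  [Fintype V] [DecidableEq V] [Fintype W] [DecidableEq W]

theorem ent_comp (X : Ω → V) (f : V → W) :
    ent q p (fun ω => f (X ω)) =
      -∑ v, prob p X v * Real.logb q (prob p (fun ω => f (X ω)) (f v)) :=
  congrArg Neg.neg (sum_prob_comp_mul X f _)

theorem ent_comp_of_injective (X : Ω → V) {f : V → W} (hf : Function.Injective f) :
    ent q p (fun ω => f (X ω)) = ent q p X := by
  rw [ent_comp]
  simp only [prob_comp_of_injective X hf, ent]

theorem ent_comp_le (hq : 1 < q) (hp0 : ∀ ω, 0 ≤ p ω) (X : Ω → V) (f : V → W) :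
    ent q p (fun ω => f (X ω)) ≤ ent q p X := by
  rw [ent_comp]
  refine neg_le_neg (sum_le_sum fun v _ => ?_)
  rcases (prob_nonneg hp0 X v).eq_or_lt with h | h
  · simp [← h]
  · exact mul_le_mul_of_nonneg_left
      (Real.logb_le_logb_of_le (mod_cast hq) h (prob_le_prob_comp hp0 X f v)) h.le

theorem IdentDist.ent_eq {X Y : Ω → V} (h : IdentDist p X Y) : ent q p X = ent q p Y := by
  simp only [ent, h _]

theorem IdentDist.cent_eq {X X' : Ω → V} {Z Z' : Ω → W}
    (h : IdentDist p (fun ω => (X ω, Z ω)) (fun ω => (X' ω, Z' ω))) :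
    cent q p X Z = cent q p X' Z' :=
  congrArg₂ (· - ·) h.ent_eq (h.comp Prod.snd).ent_eq

theorem ent_const (hp1 : ∑ ω, p ω = 1) : ent q p (fun _ => ()) = 0 := by
  simp [ent, prob, hp1]

/-- Gibbs' inequality: `log x ≤ x - 1` at `x = g v / prob p X v`, averaged over `v`. -/
theorem ent_le_neg_sum_prob_mul_logb (hq : 1 < q) (hp0 : ∀ ω, 0 ≤ p ω) (X : Ω → V) {g : V → ℝ}
    (hg0 : ∀ v, 0 ≤ g v) (hg : ∀ v, 0 < prob p X v → 0 < g v) (hsum : ∑ v, g v ≤ ∑ ω, p ω) :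
    ent q p X ≤ -∑ v, prob p X v * Real.logb q (g v) := by
  have hlog : 0 < Real.log q := Real.log_pos (mod_cast hq)
  have pointwise (v : V) : prob p X v * Real.logb q (g v) - prob p X v * Real.logb q (prob p X v) ≤
      (g v - prob p X v) / Real.log q := by
    rcases (prob_nonneg hp0 X v).eq_or_lt with h | h
    · simpa [← h] using div_nonneg (hg0 v) hlog.le
    · rw [← mul_sub, ← Real.logb_div (hg v h).ne' h.ne', Real.logb, ← mul_div_assoc]
      gcongr
      calc prob p X v * Real.log (g v / prob p X v)
          ≤ prob p X v * (g v / prob p X v - 1) := by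
            gcongr; exact Real.log_le_sub_one_of_pos (div_pos (hg v h) h)
        _ = g v - prob p X v := by field_simp
  have average := sum_le_sum fun v (_ : v ∈ univ) => pointwise v
  rw [sum_sub_distrib, ← sum_div, sum_sub_distrib, sum_prob] at average
  have : (∑ v, g v - ∑ ω, p ω) / Real.log q ≤ 0 :=
    div_nonpos_of_nonpos_of_nonneg (sub_nonpos.2 hsum) hlog.le
  rw [ent]
  linarith

theorem sum_prob_mul_prob_div_prob (X : Ω → U) (Y : Ω → V) (Z : Ω → W) :
    ∑ t : (U × V) × W, prob p (fun ω => (X ω, Z ω)) (t.1.1, t.2) *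
      prob p (fun ω => (Y ω, Z ω)) (t.1.2, t.2) / prob p Z t.2 = ∑ ω, p ω := by
  rw [Fintype.sum_prod_type_right, ← sum_prob Z]
  refine sum_congr rfl fun z _ => ?_
  simp only [Fintype.sum_prod_type, ← sum_div, ← mul_sum, sum_prob_pair, ← sum_mul,
    mul_self_div_self]

/-- Gibbs' inequality against the law under which `X` and `Y` are conditionally independent
given `Z`, with the same joint laws of `(X, Z)` and `(Y, Z)`. -/
theorem cmi_nonneg (hq : 1 < q) (hp0 : ∀ ω, 0 ≤ p ω) (X : Ω → U) (Y : Ω → V) (Z : Ω → W) :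
    0 ≤ cmi q p X Y Z := by
  set T : Ω → (U × V) × W := fun ω => ((X ω, Y ω), Z ω)
  set PXZ := prob p fun ω => (X ω, Z ω)
  set PYZ := prob p fun ω => (Y ω, Z ω)
  have marginals_pos (t) (ht : 0 < prob p T t) :
      0 < PXZ (t.1.1, t.2) ∧ 0 < PYZ (t.1.2, t.2) ∧ 0 < prob p Z t.2 :=
    ⟨ht.trans_le (prob_le_prob_comp hp0 T (fun t => (t.1.1, t.2)) t),
      ht.trans_le (prob_le_prob_comp hp0 T (fun t => (t.1.2, t.2)) t),
      ht.trans_le (prob_le_prob_comp hp0 T Prod.snd t)⟩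
  have gibbs := ent_le_neg_sum_prob_mul_logb hq hp0 T
    (g := fun t => PXZ (t.1.1, t.2) * PYZ (t.1.2, t.2) / prob p Z t.2)
    (fun t => div_nonneg (mul_nonneg (prob_nonneg hp0 _ _) (prob_nonneg hp0 _ _))
      (prob_nonneg hp0 _ _))
    (fun t ht => by obtain ⟨hx, hy, hz⟩ := marginals_pos t ht; positivity)
    (sum_prob_mul_prob_div_prob X Y Z).le
  have split_log (t) : prob p T t *
      Real.logb q (PXZ (t.1.1, t.2) * PYZ (t.1.2, t.2) / prob p Z t.2) =
      prob p T t * Real.logb q (PXZ (t.1.1, t.2)) +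
        prob p T t * Real.logb q (PYZ (t.1.2, t.2)) -
        prob p T t * Real.logb q (prob p Z t.2) := by
    rcases (prob_nonneg hp0 T t).eq_or_lt with h | h
    · simp [← h]
    · obtain ⟨hx, hy, hz⟩ := marginals_pos t h
      rw [Real.logb_div (mul_pos hx hy).ne' hz.ne', Real.logb_mul hx.ne' hy.ne']
      ring
  have hXZ := ent_comp (q := q) (p := p) T fun t => (t.1.1, t.2)
  have hYZ := ent_comp (q := q) (p := p) T fun t => (t.1.2, t.2)
  have hZ := ent_comp (q := q) (p := p) T Prod.snd
  simp only [split_log, sum_add_distrib, sum_sub_distrib] at gibbs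
  simp only [cmi, cent]
  linarith

theorem cent_pair (X : Ω → U) (Y : Ω → V) (Z : Ω → W) :
    cent q p (fun ω => (X ω, Y ω)) Z = cent q p Y Z + cent q p X (fun ω => (Y ω, Z ω)) := by
  have := ent_comp_of_injective (q := q) (p := p) (fun ω => ((X ω, Y ω), Z ω))
    (Equiv.prodAssoc U V W).injective
  simp only [Equiv.prodAssoc_apply] at this
  simp only [cent, this]
  ring

theorem cent_pair_comm (X : Ω → U) (Y : Ω → V) (Z : Ω → W) :
    cent q p (fun ω => (X ω, Y ω)) Z = cent q p (fun ω => (Y ω, X ω)) Z :=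
  congrArg (· - ent q p Z) <| ent_comp_of_injective (fun ω => ((Y ω, X ω), Z ω))
    (f := Prod.map Prod.swap id) (Prod.swap_injective.prodMap Function.injective_id)

theorem cmi_eq_cent_sub_cent (X : Ω → U) (Y : Ω → V) (Z : Ω → W) :
    cmi q p X Y Z = cent q p X Z - cent q p X (fun ω => (Y ω, Z ω)) := by
  rw [cmi, cent_pair]
  ring

theorem cmi_comm (X : Ω → U) (Y : Ω → V) (Z : Ω → W) : cmi q p X Y Z = cmi q p Y X Z := by
  rw [cmi, cmi, cent_pair_comm, add_comm]

theorem mi_eq_ent_sub_cent (X : Ω → U) (Y : Ω → V) : mi q p X Y = ent q p X - cent q p X Y := by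
  rw [mi, cent]
  ring

theorem mi_comm (X : Ω → U) (Y : Ω → V) : mi q p X Y = mi q p Y X := by
  rw [mi, mi, add_comm, ← ent_comp_of_injective (fun ω => (X ω, Y ω)) Prod.swap_injective]
  rfl

theorem cent_nonneg (hq : 1 < q) (hp0 : ∀ ω, 0 ≤ p ω) (X : Ω → U) (Z : Ω → W) :
    0 ≤ cent q p X Z :=
  sub_nonneg.2 (ent_comp_le hq hp0 (fun ω => (X ω, Z ω)) Prod.snd)

theorem cent_comp_left_le (hq : 1 < q) (hp0 : ∀ ω, 0 ≤ p ω) (X : Ω → U) (f : U → V)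
    (Z : Ω → W) : cent q p (fun ω => f (X ω)) Z ≤ cent q p X Z :=
  sub_le_sub_right (ent_comp_le hq hp0 (fun ω => (X ω, Z ω)) (Prod.map f id)) _

theorem cent_le_cent_comp_right (hq : 1 < q) (hp0 : ∀ ω, 0 ≤ p ω) (X : Ω → U) (Z : Ω → V)
    (g : V → W) : cent q p X Z ≤ cent q p X (fun ω => g (Z ω)) := by
  have hcmi := cmi_nonneg hq hp0 X Z (fun ω => g (Z ω))
  have hZ := ent_comp_of_injective (q := q) (p := p) Z (f := fun z => (z, g z))
    fun _ _ h => congrArg Prod.fst h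
  have hXZ := ent_comp_of_injective (q := q) (p := p) (fun ω => (X ω, Z ω))
    (f := fun t => (t, g t.2)) fun _ _ h => congrArg Prod.fst h
  simp only [cmi, cent] at hcmi ⊢
  linarith

theorem cent_le_cent_pair_right_of_cent_eq_zero (hq : 1 < q) (hp0 : ∀ ω, 0 ≤ p ω) (X : Ω → U)
    {Y : Ω → V} {Z : Ω → W} (hY : cent q p Y Z = 0) :
    cent q p X Z ≤ cent q p X (fun ω => (Y ω, Z ω)) := by
  have hchain := cent_pair (q := q) (p := p) X Y Z
  have hX := cent_comp_left_le hq hp0 (fun ω => (X ω, Y ω)) Prod.fst Z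
  linarith

theorem mi_nonneg (hq : 1 < q) (hp0 : ∀ ω, 0 ≤ p ω) (hp1 : ∑ ω, p ω = 1) (X : Ω → U)
    (Y : Ω → V) : 0 ≤ mi q p X Y := by
  have hcmi := cmi_nonneg hq hp0 X Y (fun _ => ())
  have drop_unit {V : Type} [Fintype V] [DecidableEq V] (X : Ω → V) :
      ent q p (fun ω => (X ω, ())) = ent q p X :=
    ent_comp_of_injective X (f := fun v => (v, ())) fun _ _ h => congrArg Prod.fst h
  simp only [cmi, cent, drop_unit, ent_const hp1] at hcmi
  rw [mi]
  linarith

theorem mi_comp_left_le (hq : 1 < q) (hp0 : ∀ ω, 0 ≤ p ω) (X : Ω → U) (f : U → V) (Y : Ω → W) :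
    mi q p (fun ω => f (X ω)) Y ≤ mi q p X Y := by
  rw [mi_comm, mi_comm X, mi_eq_ent_sub_cent, mi_eq_ent_sub_cent]
  exact sub_le_sub_left (cent_le_cent_comp_right hq hp0 Y X f) _

theorem mi_pair_eq_zero_of_ent_eq_add_add (hq : 1 < q) (hp0 : ∀ ω, 0 ≤ p ω)
    (hp1 : ∑ ω, p ω = 1) {X : Ω → U} {Y : Ω → V} {Z : Ω → W}
    (h : ent q p (fun ω => (X ω, Y ω, Z ω)) = ent q p X + ent q p Y + ent q p Z) :
    mi q p X (fun ω => (Z ω, Y ω)) = 0 := by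
  have hX := mi_nonneg hq hp0 hp1 X (fun ω => (Z ω, Y ω))
  have hZY := mi_nonneg hq hp0 hp1 Z Y
  have hswap := ent_comp_of_injective (q := q) (p := p) (fun ω => (X ω, Y ω, Z ω))
    (Function.injective_id.prodMap Prod.swap_injective)
  simp only [Prod.map, id, Prod.swap] at hswap
  rw [mi] at hX hZY ⊢
  linarith

theorem cent_le_cent_pair_right_of_mi_eq_zero (hq : 1 < q) (hp0 : ∀ ω, 0 ≤ p ω)
    (hp1 : ∑ ω, p ω = 1) {F : Ω → U} {Q : Ω → V} {Y : Ω → W}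
    (hFY : mi q p F Y = 0) (hQF : cent q p Q F = 0) :
    cent q p F Q ≤ cent q p F (fun ω => (Q ω, Y ω)) := by
  have hQY := mi_nonneg hq hp0 hp1 Q Y
  have hQF_comm := mi_comm (q := q) (p := p) F Q
  have hchain := cent_pair (q := q) (p := p) F Q Y
  have hF := cent_comp_left_le hq hp0 (fun ω => (F ω, Q ω)) Prod.fst Y
  simp only [mi_eq_ent_sub_cent] at hFY hQY hQF_comm
  linarith

/-- Given `Q`, the variable `F` is independent of `Y`, hence of `(Y, A)`; so once `(Q, A)` is known,
learning `F` tells nothing more about `f Y`. -/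
theorem cent_comp_le_cent_pair_right_of_markov {R R' : Type}
    [Fintype R] [DecidableEq R] [Fintype R'] [DecidableEq R'] (hq : 1 < q)
    (hp0 : ∀ ω, 0 ≤ p ω) (hp1 : ∑ ω, p ω = 1) {F : Ω → U} {Q : Ω → V} {A : Ω → W}
    (Y : Ω → R) (f : R → R')
    (hFY : mi q p F Y = 0) (hQF : cent q p Q F = 0)
    (hA : cent q p A (fun ω => (Q ω, Y ω)) = 0) :
    cent q p (fun ω => f (Y ω)) (fun ω => (Q ω, A ω)) ≤
      cent q p (fun ω => f (Y ω)) (fun ω => (F ω, Q ω, A ω)) := by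
  have hF : cent q p F (fun ω => (Q ω, A ω)) ≤ cent q p F (fun ω => (f (Y ω), Q ω, A ω)) :=
    calc cent q p F (fun ω => (Q ω, A ω)) ≤ cent q p F Q :=
          cent_le_cent_comp_right hq hp0 F (fun ω => (Q ω, A ω)) Prod.fst
      _ ≤ cent q p F (fun ω => (Q ω, Y ω)) :=
          cent_le_cent_pair_right_of_mi_eq_zero hq hp0 hp1 hFY hQF
      _ ≤ cent q p F (fun ω => (A ω, Q ω, Y ω)) :=
          cent_le_cent_pair_right_of_cent_eq_zero hq hp0 F hA
      _ ≤ cent q p F (fun ω => (f (Y ω), Q ω, A ω)) :=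
          cent_le_cent_comp_right hq hp0 F (fun ω => (A ω, Q ω, Y ω))
            (fun t => (f t.2.2, t.2.1, t.1))
  have hcomm := cmi_comm (q := q) (p := p) F (fun ω => f (Y ω)) (fun ω => (Q ω, A ω))
  rw [cmi_eq_cent_sub_cent, cmi_eq_cent_sub_cent] at hcomm
  linarith

theorem cent_comp_le_cent_sub_cent_comp {R : Type} [Fintype R] [DecidableEq R] (hq : 1 < q)
    (hp0 : ∀ ω, 0 ≤ p ω) {X : Ω → U} (A : Ω → V) {F : Ω → W} (g : V → R)
    (hX : cent q p X (fun ω => (A ω, F ω)) = 0) :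
    cent q p X (fun ω => (g (A ω), F ω)) ≤ cent q p A F - cent q p (fun ω => g (A ω)) F := by
  have hchain := cent_pair (q := q) (p := p) X A F
  have hchain_comp := cent_pair (q := q) (p := p) X (fun ω => g (A ω)) F
  have hmono := cent_comp_left_le hq hp0 (fun ω => (X ω, A ω)) (Prod.map id g) F
  simp only [Prod.map, id] at hmono
  linarith

end Entropy

section Retrieval

variable {q : ℕ} {p : Ω → ℝ}

theorem cent_add_cent_le_cent_insert (hq : 1 < q) (hp0 : ∀ ω, 0 ≤ p ω) {ι MT BT : Type}
    [DecidableEq ι] [Fintype MT] [DecidableEq MT] [Fintype BT] [DecidableEq BT]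
    (W : ι → Ω → MT) (B : Ω → BT) (k : ι) (T : Finset ι) :
    cent q p (fun ω (j : T) => W j ω) B + cent q p (W k) (fun ω => ((fun j : T => W j ω), B ω)) ≤
      cent q p (fun ω (j : ↥(insert k T)) => W j ω) B := by
  rw [← cent_pair]
  exact cent_comp_left_le hq hp0 (fun ω (j : ↥(insert k T)) => W j ω)
    (fun w => (w ⟨k, mem_insert_self k T⟩, fun j : T => w ⟨j, mem_insert_of_mem j.2⟩)) B

theorem sum_le_cent_of_forall_notMem (hq : 1 < q) (hp0 : ∀ ω, 0 ≤ p ω) {ι MT BT : Type}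
    [Fintype ι] [DecidableEq ι] [Fintype MT] [DecidableEq MT] [Fintype BT] [DecidableEq BT]
    {W : ι → Ω → MT} {B : Ω → BT} {P : ℕ} (hP : P < Fintype.card ι) {c : ι → ℝ}
    (hc : ∀ 𝒫₁ : Finset ι, 𝒫₁.card = P → ∀ k ∉ 𝒫₁,
      c k ≤ cent q p (W k) (fun ω => ((fun j : 𝒫₁ => W j ω), B ω)))
    {T : Finset ι} (hT : T.card ≤ P + 1) :
    ∑ k ∈ T, c k ≤ cent q p (fun ω (j : T) => W j ω) B := by
  induction T using Finset.induction_on with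
  | empty => simpa using cent_nonneg hq hp0 _ B
  | insert k T hkT ih =>
    rw [card_insert_of_notMem hkT] at hT
    obtain ⟨𝒫₁, hT𝒫₁, h𝒫₁k, h𝒫₁⟩ : ∃ 𝒫₁, T ⊆ 𝒫₁ ∧ 𝒫₁ ⊆ {k}ᶜ ∧ 𝒫₁.card = P :=
      exists_subsuperset_card_eq (by simpa using hkT) (by omega)
        (by rw [card_compl, card_singleton]; omega)
    have hk : k ∉ 𝒫₁ := fun h => by simpa using h𝒫₁k h
    calc ∑ j ∈ insert k T, c j = ∑ j ∈ T, c j + c k := by rw [sum_insert hkT, add_comm]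
      _ ≤ cent q p (fun ω (j : T) => W j ω) B +
          cent q p (W k) (fun ω => ((fun j : 𝒫₁ => W j ω), B ω)) :=
        add_le_add (ih (by omega)) (hc 𝒫₁ h𝒫₁ k hk)
      _ ≤ cent q p (fun ω (j : T) => W j ω) B +
          cent q p (W k) (fun ω => ((fun j : T => W j ω), B ω)) := by
        gcongr
        exact cent_le_cent_comp_right hq hp0 (W k) (fun ω => ((fun j : 𝒫₁ => W j ω), B ω))
          (fun t => ((fun j : T => t.1 ⟨j, hT𝒫₁ j.2⟩), t.2))
      _ ≤ _ := cent_add_cent_le_cent_insert hq hp0 W B k T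

theorem ent_message_le_cent (hq : 1 < q) (hp0 : ∀ ω, 0 ≤ p ω) {ι κ MT QT AT FT : Type}
    [Fintype ι] [DecidableEq ι] [Fintype κ] [DecidableEq κ] [Fintype MT] [DecidableEq MT]
    [Fintype QT] [DecidableEq QT] [Fintype AT] [DecidableEq AT] [Fintype FT] [DecidableEq FT]
    {W : ι → Ω → MT} {F : Ω → FT} {Q : κ → Ω → QT} {A : κ → Ω → AT} {T : Finset ι}
    (hrel : cent q p (fun ω (k : T) => W k ω) (fun ω => ((fun n => A n ω), F ω)) = 0)
    (hdpriv : mi q p (fun ω (k : ↥Tᶜ) => W k ω)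
      (fun ω => ((fun n => Q n ω), (fun n => A n ω), F ω)) = 0)
    (n : κ) {k : ι} (hk : k ∉ T) :
    ent q p (W k) ≤ cent q p (W k) (fun ω => ((fun j : T => W j ω), Q n ω, A n ω)) := by
  set D : Ω → (κ → QT) × (κ → AT) × FT := fun ω => ((fun n => Q n ω), (fun n => A n ω), F ω)
  set WT : Ω → T → MT := fun ω j => W j ω
  have decodable : cent q p WT D = 0 :=
    ((cent_le_cent_comp_right hq hp0 WT D Prod.snd).trans_eq hrel).antisymm
      (cent_nonneg hq hp0 WT D)
  have mi_nonpos : mi q p (W k) D ≤ 0 :=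
    (mi_comp_left_le hq hp0 (fun ω (j : ↥Tᶜ) => W j ω)
      (fun w => w ⟨k, mem_compl.2 hk⟩) D).trans_eq hdpriv
  calc ent q p (W k) ≤ cent q p (W k) D := by
        rwa [mi_eq_ent_sub_cent, sub_nonpos] at mi_nonpos
    _ ≤ cent q p (W k) (fun ω => (WT ω, D ω)) :=
        cent_le_cent_pair_right_of_cent_eq_zero hq hp0 (W k) decodable
    _ ≤ cent q p (W k) (fun ω => (WT ω, Q n ω, A n ω)) :=
        cent_le_cent_comp_right hq hp0 (W k) (fun ω => (WT ω, D ω))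
          (fun t => (t.1, t.2.1 n, t.2.2.1 n))

theorem download_lower_bound_step_general
    {ι κ MT QT AT FT ST : Type}
    [Fintype ι] [DecidableEq ι] [Fintype κ] [DecidableEq κ]
    [Fintype MT] [DecidableEq MT] [Fintype QT] [DecidableEq QT]
    [Fintype AT] [DecidableEq AT] [Fintype FT] [DecidableEq FT]
    [Fintype ST] [DecidableEq ST]
    {P q : ℕ} (hP : P < Fintype.card ι) (hq : 1 < q)
    {p : Ω → ℝ} (hp0 : ∀ ω, 0 ≤ p ω) (hp1 : ∑ ω, p ω = 1)
    {W : ι → Ω → MT} {F : Ω → FT} {S : Ω → ST}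
    {Q : Finset ι → κ → Ω → QT} {A : Finset ι → κ → Ω → AT}
    (hind : mi q p F (fun ω => ((fun k => W k ω), S ω)) = 0)
    (hQdet : ∀ 𝒫₀ : Finset ι, 𝒫₀.card = P → cent q p (fun ω n => Q 𝒫₀ n ω) F = 0)
    (hAdet : ∀ 𝒫₀ : Finset ι, 𝒫₀.card = P → ∀ n,
      cent q p (A 𝒫₀ n) (fun ω => (Q 𝒫₀ n ω, (fun k => W k ω), S ω)) = 0)
    (hrel : ∀ 𝒫₀ : Finset ι, 𝒫₀.card = P →
      cent q p (fun ω (k : 𝒫₀) => W k ω) (fun ω => ((fun n => A 𝒫₀ n ω), F ω)) = 0)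
    (hupriv : ∀ (n : κ) (𝒫₁ 𝒫₂ : Finset ι), 𝒫₁.card = P → 𝒫₂.card = P →
      IdentDist p
        (fun ω => (Q 𝒫₁ n ω, A 𝒫₁ n ω, fun k => W k ω))
        (fun ω => (Q 𝒫₂ n ω, A 𝒫₂ n ω, fun k => W k ω)))
    (hdpriv : ∀ 𝒫₀ : Finset ι, 𝒫₀.card = P →
      mi q p (fun ω (k : ↥𝒫₀ᶜ) => W k ω)
        (fun ω => ((fun n => Q 𝒫₀ n ω), (fun n => A 𝒫₀ n ω), F ω)) = 0)
    {𝒫₀ : Finset ι} (h𝒫₀ : 𝒫₀.card = P) (n : κ) :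
    ∑ k ∈ 𝒫₀, ent q p (W k) ≤
      cent q p (fun ω n => A 𝒫₀ n ω) F - cent q p (A 𝒫₀ n) F := by
  have private_message (T : Finset ι) (hT : T.card = P) (k : ι) (hk : k ∉ T) :
      ent q p (W k) ≤ cent q p (W k) (fun ω => ((fun j : T => W j ω), Q 𝒫₀ n ω, A 𝒫₀ n ω)) :=
    (ent_message_le_cent hq hp0 (hrel T hT) (hdpriv T hT) n hk).trans_eq
      ((hupriv n T 𝒫₀ hT h𝒫₀).comp fun t => (t.2.2 k, (fun j : T => t.2.2 j), t.1, t.2.1)).cent_eq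
  have query_det : cent q p (Q 𝒫₀ n) F = 0 :=
    ((cent_comp_left_le hq hp0 (fun ω n => Q 𝒫₀ n ω) (fun v : κ → QT => v n) F).trans_eq
      (hQdet 𝒫₀ h𝒫₀)).antisymm (cent_nonneg hq hp0 _ _)
  calc ∑ k ∈ 𝒫₀, ent q p (W k)
      ≤ cent q p (fun ω (k : 𝒫₀) => W k ω) (fun ω => (Q 𝒫₀ n ω, A 𝒫₀ n ω)) :=
        sum_le_cent_of_forall_notMem hq hp0 hP private_message (by omega)
    _ ≤ cent q p (fun ω (k : 𝒫₀) => W k ω) (fun ω => (F ω, Q 𝒫₀ n ω, A 𝒫₀ n ω)) :=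
        cent_comp_le_cent_pair_right_of_markov hq hp0 hp1 (fun ω => ((fun k => W k ω), S ω))
          (fun (y : (ι → MT) × ST) (k : 𝒫₀) => y.1 k) hind query_det (hAdet 𝒫₀ h𝒫₀ n)
    _ ≤ cent q p (fun ω (k : 𝒫₀) => W k ω) (fun ω => (A 𝒫₀ n ω, F ω)) :=
        cent_le_cent_comp_right hq hp0 _ (fun ω => (F ω, Q 𝒫₀ n ω, A 𝒫₀ n ω))
          (fun t => (t.2.2, t.1))
    _ ≤ cent q p (fun ω n => A 𝒫₀ n ω) F - cent q p (A 𝒫₀ n) F :=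
        cent_comp_le_cent_sub_cent_comp hq hp0 (fun ω n => A 𝒫₀ n ω) (fun a : κ → AT => a n)
          (hrel 𝒫₀ h𝒫₀)

end Retrieval

theorem download_lower_bound_step
    {Ω MT QT AT FT ST : Type}
    [Fintype Ω] [Fintype MT] [DecidableEq MT] [Fintype QT] [DecidableEq QT]
    [Fintype AT] [DecidableEq AT] [Fintype FT] [DecidableEq FT]
    [Fintype ST] [DecidableEq ST]
    (N K P L q : ℕ) (hN : 2 ≤ N) (hK : 2 ≤ K) (hP1 : 1 ≤ P) (hP2 : P ≤ K - 1)
    (hL : 1 ≤ L) (hq : IsPrimePow q)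
    (p : Ω → ℝ) (hp0 : ∀ ω, 0 ≤ p ω) (hp1 : (∑ ω, p ω) = 1)
    (W : Fin K → Ω → MT) (F : Ω → FT) (S : Ω → ST)
    (Q : Finset (Fin K) → Fin N → Ω → QT)
    (A : Finset (Fin K) → Fin N → Ω → AT)
    (hWk : ∀ k, ent q p (W k) = (L : ℝ))
    (hWall : ent q p (fun ω (k : Fin K) => W k ω) = (K : ℝ) * L)
    (hind : ent q p (fun ω => (F ω, S ω, fun k : Fin K => W k ω)) =
      ent q p F + ent q p S + ent q p (fun ω (k : Fin K) => W k ω))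
    (hQdet : ∀ 𝒫₀ : Finset (Fin K), 𝒫₀.card = P →
      cent q p (fun ω (n : Fin N) => Q 𝒫₀ n ω) F = 0)
    (hAdet : ∀ 𝒫₀ : Finset (Fin K), 𝒫₀.card = P → ∀ n : Fin N,
      cent q p (A 𝒫₀ n) (fun ω => (Q 𝒫₀ n ω, (fun k : Fin K => W k ω), S ω)) = 0)
    (hrel : ∀ 𝒫₀ : Finset (Fin K), 𝒫₀.card = P →
      cent q p (fun ω (k : {x : Fin K // x ∈ 𝒫₀}) => W k.1 ω)
        (fun ω => ((fun n : Fin N => A 𝒫₀ n ω), F ω)) = 0)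
    (hupriv : ∀ (n : Fin N) (𝒫₁ 𝒫₂ : Finset (Fin K)), 𝒫₁.card = P → 𝒫₂.card = P →
      IdentDist p
        (fun ω => (Q 𝒫₁ n ω, A 𝒫₁ n ω, (fun k : Fin K => W k ω), S ω))
        (fun ω => (Q 𝒫₂ n ω, A 𝒫₂ n ω, (fun k : Fin K => W k ω), S ω)))
    (hdpriv : ∀ 𝒫₀ : Finset (Fin K), 𝒫₀.card = P →
      mi q p (fun ω (k : {x : Fin K // x ∈ 𝒫₀ᶜ}) => W k.1 ω)
        (fun ω => ((fun n : Fin N => Q 𝒫₀ n ω), (fun n : Fin N => A 𝒫₀ n ω), F ω)) = 0)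
    : ∀ (𝒫₀ : Finset (Fin K)), 𝒫₀.card = P → ∀ n : Fin N,
      (P : ℝ) * L ≤ cent q p (fun ω (n : Fin N) => A 𝒫₀ n ω) F - cent q p (A 𝒫₀ n) F := by
  intro 𝒫₀ h𝒫₀ n
  calc (P : ℝ) * L = ∑ k ∈ 𝒫₀, ent q p (W k) := by simp [hWk, h𝒫₀]
    _ ≤ _ := download_lower_bound_step_general (by rw [Fintype.card_fin]; omega) hq.one_lt hp0 hp1
      (mi_pair_eq_zero_of_ent_eq_add_add hq.one_lt hp0 hp1 hind) hQdet hAdet hrel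
      (fun n 𝒫₁ 𝒫₂ h₁ h₂ => (hupriv n 𝒫₁ 𝒫₂ h₁ h₂).comp fun t => (t.1, t.2.1, t.2.2.1))
      hdpriv h𝒫₀ n

end MMSPIR
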